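/- Let G = (V,E) be a finite simple graph, let Γ be a group of automorphisms of G preserving node weights c ∈ ℤ^V (i.e., c_{γ(v)} = c_v for all γ ∈ Γ, v ∈ V), let L be a sequence of distinct leaders with stabilizer-chain orbits, and let S = S(L) be the SST cuts. Suppose c_v ≠ 0 for all v ∈ V. Define the graph G' = (V',E') obtained by the deletion and addition operations: V' = V \ {f : (ℓ,f) ∈ S and {ℓ,f} ∈ E}, and E' = {e ∈ E : e ⊆ V'} ∪ {{v,f} : (ℓ,f) ∈ S, f ∈ V', v ∈ V', v ≠ f, {ℓ,v} ∈ E}. Then every stable set I of G' that maximizes Σ_{v∈I} c_v among stable sets of G' is a stable set of G whose weight equals max{Σ_{v∈J} c_v : J stable in G}, and its indicator vector χ_I satisfies all SST cuts in S. -/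

import Mathlib

open Finset

/-- The stabilizer chain: `sstChain Γ ℓ 0 = Γ` and
`sstChain Γ ℓ (i+1)` is the pointwise stabilizer of `ℓ i` inside `sstChain Γ ℓ i`. -/
def sstChain {α : Type*} (Γ : Set (Equiv.Perm α)) (ℓ : ℕ → α) : ℕ → Set (Equiv.Perm α)
  | 0 => Γ
  | i + 1 => {γ ∈ sstChain Γ ℓ i | γ (ℓ i) = ℓ i}

/-- The orbit `O_i` of the leader `ℓ i` under the `i`-th group of the stabilizer chain. -/
def sstOrbit {α : Type*} (Γ : Set (Equiv.Perm α)) (ℓ : ℕ → α) (i : ℕ) : Set α :=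
  (fun γ : Equiv.Perm α => γ (ℓ i)) '' sstChain Γ ℓ i

/-- The SST cuts `S(L)`: pairs `(ℓ i, f)` with `f ∈ O_i \ {ℓ i}`, for `i < k`. -/
def sstCuts {α : Type*} (Γ : Set (Equiv.Perm α)) (ℓ : ℕ → α) (k : ℕ) : Set (α × α) :=
  {p | ∃ i < k, p.1 = ℓ i ∧ p.2 ∈ sstOrbit Γ ℓ i ∧ p.2 ≠ ℓ i}

/-- `I` is a stable set of `G`. -/
def IsStableSet {V : Type*} (G : SimpleGraph V) (I : Finset V) : Prop :=
  ∀ u ∈ I, ∀ v ∈ I, ¬ G.Adj u v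

/-- The indicator vector of a finite node set. -/
def indic {V : Type*} [DecidableEq V] (I : Finset V) : V → ℝ :=
  fun v => if v ∈ I then 1 else 0


/-- The nodes kept by the deletion operation: followers adjacent to their leader
are removed. -/
def keptNodes {V : Type*} (G : SimpleGraph V) (S : Set (V × V)) : Set V :=
  {v | ¬ ∃ l, (l, v) ∈ S ∧ G.Adj l v}

/-- The graph `G'` obtained from `G` by the deletion and addition operations:
its nodes are the kept nodes, its edges are the edges of `G` between kept nodes
together with an edge `{v, f}` for every SST cut `(l, f) ∈ S` with `f` kept and
every kept neighbor `v` of the leader `l`. -/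
def presolvedGraph {V : Type*} (G : SimpleGraph V) (S : Set (V × V)) : SimpleGraph V :=
  SimpleGraph.fromRel (fun u v =>
    u ∈ keptNodes G S ∧ v ∈ keptNodes G S ∧
    (G.Adj u v ∨ ∃ l, (l, v) ∈ S ∧ G.Adj l u))

/-!
Call a node set *closed* if it contains the leader of each of its followers. A node set is stable
in `G'` iff it is stable in `G` and no leader of one of its followers has a neighbour in it. Hence
stable sets of `G'` are stable in `G`, and closed stable sets of `G` are stable in `G'`. Moving
along the stabilizer chain, every stable set of `G` is mapped by some element of `Γ` to a closed
one, so both graphs have the same optimal weight. Finally, adding the leader of a follower in a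
stable set of `G'` keeps it stable in `G'`. A leader has the weight of its followers, and this
weight is positive if the follower lies in an optimal set, so an optimal set already contains the
leader.
-/

section StabilizerChain

variable {V : Type*} {ℓ : ℕ → V} {i j k : ℕ} {l m f g : V} {γ : Equiv.Perm V}

theorem mem_sstChain_iff {Γ : Set (Equiv.Perm V)} :
    γ ∈ sstChain Γ ℓ k ↔ γ ∈ Γ ∧ ∀ i < k, γ (ℓ i) = ℓ i := by
  induction k with
  | zero => simp [sstChain]
  | succ k ih =>
    simp only [sstChain, Set.mem_ofPred_eq, ih, Nat.forall_lt_succ_right, and_assoc]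

theorem sstCuts_mono {Γ : Set (Equiv.Perm V)} (hij : i ≤ j) : sstCuts Γ ℓ i ⊆ sstCuts Γ ℓ j :=
  fun _ ⟨n, hn, hcut⟩ => ⟨n, hn.trans_le hij, hcut⟩

theorem apply_leader_of_mem_sstCuts {Γ : Set (Equiv.Perm V)} (hγ : γ ∈ sstChain Γ ℓ k)
    (h : (l, f) ∈ sstCuts Γ ℓ k) : γ l = l := by
  obtain ⟨i, hi, rfl : l = ℓ i, -⟩ := h
  exact (mem_sstChain_iff.1 hγ).2 i hi

theorem lt_of_mem_sstOrbit {Γ : Set (Equiv.Perm V)} (h : ℓ i ∈ sstOrbit Γ ℓ j) (hne : ℓ i ≠ ℓ j) :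
    j < i := by
  obtain ⟨γ, hγ, hγj : γ (ℓ j) = ℓ i⟩ := h
  by_contra! hij
  have hlt : i < j := hij.lt_of_ne fun h => hne (h ▸ rfl)
  have hγi : γ (ℓ i) = ℓ i := (mem_sstChain_iff.1 hγ).2 i hlt
  exact hne (γ.injective (hγi.trans hγj.symm))

theorem adj_or_adj_of_mem_sstCuts {G : SimpleGraph V} {Γ : Set (Equiv.Perm V)}
    (hΓ : ∀ γ ∈ Γ, ∀ u v, G.Adj (γ u) (γ v) ↔ G.Adj u v)
    (hlf : (l, f) ∈ sstCuts Γ ℓ k) (hmg : (m, g) ∈ sstCuts Γ ℓ k) (hlm : G.Adj l m) :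
    G.Adj f m ∨ G.Adj l g := by
  obtain ⟨i, -, rfl : l = ℓ i, ⟨γ, hγ, rfl⟩, -⟩ := hlf
  obtain ⟨j, -, rfl : m = ℓ j, ⟨δ, hδ, rfl⟩, -⟩ := hmg
  rw [mem_sstChain_iff] at hγ hδ
  -- The permutation moving the later leader to its follower fixes the earlier leader.
  rcases lt_trichotomy i j with hij | rfl | hji
  · right
    simpa only [hδ.2 i hij] using (hΓ δ hδ.1 _ _).2 hlm
  · exact (G.irrefl hlm).elim
  · left
    simpa only [hγ.2 j hji] using (hΓ γ hγ.1 _ _).2 hlm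

theorem weight_eq_of_mem_sstCuts {M : Type*} {c : V → M} {Γ : Set (Equiv.Perm V)}
    (hΓc : ∀ γ ∈ Γ, ∀ v, c (γ v) = c v) (h : (l, f) ∈ sstCuts Γ ℓ k) : c f = c l := by
  obtain ⟨i, -, rfl : l = ℓ i, ⟨γ, hγ, rfl⟩, -⟩ := h
  exact hΓc γ (mem_sstChain_iff.1 hγ).1 _

variable {Γ : Subgroup (Equiv.Perm V)}

theorem apply_mem_sstOrbit (hγ : γ ∈ sstChain (Γ : Set (Equiv.Perm V)) ℓ k) (hik : i ≤ k)
    (hf : f ∈ sstOrbit (Γ : Set (Equiv.Perm V)) ℓ i) :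
    γ f ∈ sstOrbit (Γ : Set (Equiv.Perm V)) ℓ i := by
  obtain ⟨δ, hδ, rfl⟩ := hf
  rw [mem_sstChain_iff] at hγ hδ
  refine ⟨γ * δ, mem_sstChain_iff.2 ⟨Γ.mul_mem hγ.1 hδ.1, fun j hj => ?_⟩, rfl⟩
  rw [Equiv.Perm.mul_apply, hδ.2 j hj, hγ.2 j (hj.trans_le hik)]

theorem apply_follower_mem_sstCuts (hγ : γ ∈ sstChain (Γ : Set (Equiv.Perm V)) ℓ k)
    (h : (l, f) ∈ sstCuts (Γ : Set (Equiv.Perm V)) ℓ k) :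
    (l, γ f) ∈ sstCuts (Γ : Set (Equiv.Perm V)) ℓ k := by
  have hγl : γ l = l := apply_leader_of_mem_sstCuts hγ h
  obtain ⟨i, hi, rfl : l = ℓ i, hf, hne : f ≠ ℓ i⟩ := h
  exact ⟨i, hi, rfl, apply_mem_sstOrbit hγ hi.le hf, fun h => hne (γ.injective (h.trans hγl.symm))⟩

theorem sstCuts_trans (hlm : (l, m) ∈ sstCuts (Γ : Set (Equiv.Perm V)) ℓ k)
    (hmf : (m, f) ∈ sstCuts (Γ : Set (Equiv.Perm V)) ℓ k) :
    (l, f) ∈ sstCuts (Γ : Set (Equiv.Perm V)) ℓ k := by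
  obtain ⟨i, hi, rfl : m = ℓ i, ⟨γ, hγ, rfl⟩, -⟩ := hmf
  obtain ⟨j, -, rfl : l = ℓ j, hm, hne⟩ := hlm
  have hcut : (ℓ j, ℓ i) ∈ sstCuts (Γ : Set (Equiv.Perm V)) ℓ i :=
    ⟨j, lt_of_mem_sstOrbit hm hne, rfl, hm, hne⟩
  exact sstCuts_mono hi.le (apply_follower_mem_sstCuts hγ hcut)

end StabilizerChain

section ClosedSets

variable {V : Type*}

/-- `I` contains the leader of each of its followers with respect to the cuts `S`; equivalently,
its indicator vector satisfies all cuts in `S`. -/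
def IsLeaderClosed (S : Set (V × V)) (I : Finset V) : Prop :=
  ∀ l f, (l, f) ∈ S → f ∈ I → l ∈ I

theorem indic_le_indic_iff [DecidableEq V] {I : Finset V} {u v : V} :
    indic I u ≤ indic I v ↔ (u ∈ I → v ∈ I) := by
  by_cases hu : u ∈ I <;> by_cases hv : v ∈ I <;> simp [indic, hu, hv]

variable {ℓ : ℕ → V} {k : ℕ} {J : Finset V} {γ : Equiv.Perm V}

theorem IsLeaderClosed.sstCuts_succ {Γ : Set (Equiv.Perm V)}
    (hJ : IsLeaderClosed (sstCuts Γ ℓ k) J) (hk : ∀ f ∈ sstOrbit Γ ℓ k, f ∈ J → ℓ k ∈ J) :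
    IsLeaderClosed (sstCuts Γ ℓ (k + 1)) J := by
  rintro l f ⟨i, hi, rfl : l = ℓ i, hf, hne⟩ hfJ
  rcases Nat.lt_succ_iff_lt_or_eq.1 hi with hik | rfl
  · exact hJ _ f ⟨i, hik, rfl, hf, hne⟩ hfJ
  · exact hk f hf hfJ

theorem IsLeaderClosed.map_symm {Γ : Subgroup (Equiv.Perm V)}
    (hJ : IsLeaderClosed (sstCuts (Γ : Set (Equiv.Perm V)) ℓ k) J)
    (hγ : γ ∈ sstChain (Γ : Set (Equiv.Perm V)) ℓ k) :
    IsLeaderClosed (sstCuts (Γ : Set (Equiv.Perm V)) ℓ k) (J.map γ.symm.toEmbedding) := by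
  intro l f hlf hf
  rw [mem_map_equiv, Equiv.symm_symm] at hf ⊢
  rw [apply_leader_of_mem_sstCuts hγ hlf]
  exact hJ l (γ f) (apply_follower_mem_sstCuts hγ hlf) hf

theorem IsStableSet.map_symm {G : SimpleGraph V} (hJ : IsStableSet G J)
    (hγ : ∀ u v, G.Adj u v → G.Adj (γ u) (γ v)) :
    IsStableSet G (J.map γ.symm.toEmbedding) := by
  intro u hu v hv huv
  rw [mem_map_equiv, Equiv.symm_symm] at hu hv
  exact hJ _ hu _ hv (hγ u v huv)

theorem sum_map_symm_eq_sum {M : Type*} [AddCommMonoid M] {c : V → M} (hγ : ∀ v, c (γ v) = c v) :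
    ∑ v ∈ J.map γ.symm.toEmbedding, c v = ∑ v ∈ J, c v := by
  rw [sum_map]
  refine sum_congr rfl fun v _ => ?_
  rw [Equiv.coe_toEmbedding, ← hγ, Equiv.apply_symm_apply]

theorem exists_isLeaderClosed_of_isStableSet {M : Type*} [AddCommMonoid M] {G : SimpleGraph V}
    {c : V → M} {Γ : Subgroup (Equiv.Perm V)}
    (hΓ : ∀ γ ∈ Γ, ∀ u v, G.Adj (γ u) (γ v) ↔ G.Adj u v)
    (hΓc : ∀ γ ∈ Γ, ∀ v, c (γ v) = c v) (hJ : IsStableSet G J) (ℓ : ℕ → V) (k : ℕ) :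
    ∃ J' : Finset V, IsStableSet G J' ∧ ∑ v ∈ J', c v = ∑ v ∈ J, c v ∧
      IsLeaderClosed (sstCuts (Γ : Set (Equiv.Perm V)) ℓ k) J' := by
  induction k with
  | zero => exact ⟨J, hJ, rfl, fun _ _ ⟨_, hi, _⟩ => (Nat.not_lt_zero _ hi).elim⟩
  | succ k ih =>
    obtain ⟨J', hstable, hweight, hclosed⟩ := ih
    by_cases hmeet : ∃ f ∈ sstOrbit (Γ : Set (Equiv.Perm V)) ℓ k, f ∈ J'
    · obtain ⟨_, ⟨γ, hγ, rfl⟩, hγJ⟩ := hmeet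
      have hγΓ : γ ∈ Γ := (mem_sstChain_iff.1 hγ).1
      have hleader : ℓ k ∈ J'.map γ.symm.toEmbedding := by
        rwa [mem_map_equiv, Equiv.symm_symm]
      exact ⟨J'.map γ.symm.toEmbedding, hstable.map_symm fun u v => (hΓ γ hγΓ u v).2,
        (sum_map_symm_eq_sum (hΓc γ hγΓ)).trans hweight,
        (hclosed.map_symm hγ).sstCuts_succ fun _ _ _ => hleader⟩
    · exact ⟨J', hstable, hweight,
        hclosed.sstCuts_succ fun f hf hfJ => (hmeet ⟨f, hf, hfJ⟩).elim⟩

end ClosedSets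

section PresolvedGraph

variable {V : Type*} {G : SimpleGraph V} {S : Set (V × V)} {I J : Finset V} {l f : V}

/-- `I` is a stable set of `G' = (V', E')`. The type of nodes of `presolvedGraph G S` is still `V`,
so that `I ⊆ V'` is a separate condition. -/
def IsPresolvedStableSet (G : SimpleGraph V) (S : Set (V × V)) (I : Finset V) : Prop :=
  (I : Set V) ⊆ keptNodes G S ∧ IsStableSet (presolvedGraph G S) I

theorem isPresolvedStableSet_iff :
    IsPresolvedStableSet G S I ↔
      IsStableSet G I ∧ ∀ l f, (l, f) ∈ S → f ∈ I → ∀ v ∈ I, ¬ G.Adj l v := by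
  constructor
  · rintro ⟨hkept, hstable⟩
    refine ⟨fun u hu v hv huv => ?_, fun l f hlf hf v hv hlv => ?_⟩
    · exact hstable u hu v hv <| (SimpleGraph.fromRel_adj _ _ _).2
        ⟨huv.ne, Or.inl ⟨hkept hu, hkept hv, Or.inl huv⟩⟩
    · have hne : v ≠ f := fun h => hkept hf ⟨l, hlf, h ▸ hlv⟩
      exact hstable v hv f hf <| (SimpleGraph.fromRel_adj _ _ _).2
        ⟨hne, Or.inl ⟨hkept hv, hkept hf, Or.inr ⟨l, hlf, hlv⟩⟩⟩
  · rintro ⟨hstable, hleader⟩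
    refine ⟨fun f hf ⟨l, hlf, hadj⟩ => hleader l f hlf hf f hf hadj, fun u hu v hv huv => ?_⟩
    obtain ⟨-, ⟨-, -, hadj | ⟨l, hlv, hlu⟩⟩ | ⟨-, -, hadj | ⟨l, hlu, hlv⟩⟩⟩ :=
      (SimpleGraph.fromRel_adj _ _ _).1 huv
    · exact hstable u hu v hv hadj
    · exact hleader l v hlv hv u hu hlu
    · exact hstable v hv u hu hadj
    · exact hleader l u hlu hu v hv hlv

theorem IsPresolvedStableSet.isStableSet (hI : IsPresolvedStableSet G S I) : IsStableSet G I :=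
  (isPresolvedStableSet_iff.1 hI).1

theorem IsPresolvedStableSet.not_adj_leader (hI : IsPresolvedStableSet G S I) (hlf : (l, f) ∈ S)
    (hf : f ∈ I) {v : V} (hv : v ∈ I) : ¬ G.Adj l v :=
  (isPresolvedStableSet_iff.1 hI).2 l f hlf hf v hv

theorem IsPresolvedStableSet.mono (hI : IsPresolvedStableSet G S I) (hJI : J ⊆ I) :
    IsPresolvedStableSet G S J :=
  ⟨fun _ hv => hI.1 (hJI hv), fun u hu v hv => hI.2 u (hJI hu) v (hJI hv)⟩

theorem IsStableSet.isPresolvedStableSet (hI : IsStableSet G I) (hclosed : IsLeaderClosed S I) :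
    IsPresolvedStableSet G S I :=
  isPresolvedStableSet_iff.2 ⟨hI, fun l f hlf hf => hI l (hclosed l f hlf hf)⟩

theorem IsStableSet.insert [DecidableEq V] (hI : IsStableSet G I) (hl : ∀ v ∈ I, ¬ G.Adj l v) :
    IsStableSet G (insert l I) := by
  simp only [IsStableSet, forall_mem_insert]
  exact ⟨⟨G.irrefl, hl⟩, fun v hv => ⟨fun h => hl v hv h.symm, hI v hv⟩⟩

theorem IsPresolvedStableSet.insert_leader [DecidableEq V]
    (htrans : ∀ {l m f}, (l, m) ∈ S → (m, f) ∈ S → (l, f) ∈ S)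
    (hadj : ∀ {l f m g}, (l, f) ∈ S → (m, g) ∈ S → G.Adj l m → G.Adj f m ∨ G.Adj l g)
    (hI : IsPresolvedStableSet G S I) (hlf : (l, f) ∈ S) (hf : f ∈ I) :
    IsPresolvedStableSet G S (insert l I) := by
  have hl : ∀ v ∈ I, ¬ G.Adj l v := fun v hv => hI.not_adj_leader hlf hf hv
  refine isPresolvedStableSet_iff.2 ⟨hI.isStableSet.insert hl, fun m g hmg hg => ?_⟩
  rw [forall_mem_insert]
  rcases mem_insert.1 hg with rfl | hg
  · have hmf : (m, f) ∈ S := htrans hmg hlf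
    refine ⟨fun hml => ?_, fun v hv => hI.not_adj_leader hmf hf hv⟩
    rcases hadj hmg hlf hml with hgg | hmf_adj
    · exact G.irrefl hgg
    · exact hI.not_adj_leader hmf hf hf hmf_adj
  · refine ⟨fun hml => ?_, fun v hv => hI.not_adj_leader hmg hg hv⟩
    rcases hadj hmg hlf hml with hgl | hmf_adj
    · exact hl g hg hgl.symm
    · exact hI.not_adj_leader hmg hg hf hmf_adj

theorem isLeaderClosed_of_forall_sum_le [DecidableEq V] {M : Type*} [AddCommMonoid M]
    [PartialOrder M] [IsOrderedCancelAddMonoid M] {c : V → M} (hc : ∀ v, c v ≠ 0)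
    (hcS : ∀ {l f}, (l, f) ∈ S → c f = c l)
    (hinsert : ∀ {l f}, (l, f) ∈ S → f ∈ I → IsPresolvedStableSet G S (insert l I))
    (hI : IsPresolvedStableSet G S I)
    (hmax : ∀ J, IsPresolvedStableSet G S J → ∑ v ∈ J, c v ≤ ∑ v ∈ I, c v) :
    IsLeaderClosed S I := by
  intro l f hlf hf
  by_contra hl
  have hf_nonneg : 0 ≤ c f := by
    have hle := hmax (I.erase f) (hI.mono (erase_subset f I))
    rwa [← add_sum_erase I c hf, le_add_iff_nonneg_left] at hle
  have hl_nonpos : c l ≤ 0 := by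
    have hle := hmax (insert l I) (hinsert hlf hf)
    rwa [sum_insert hl, add_le_iff_nonpos_left] at hle
  exact hc l (hl_nonpos.antisymm (hcS hlf ▸ hf_nonneg))

end PresolvedGraph

theorem presolvedGraph_optimal_stable_set_general
    {V M : Type*} [DecidableEq V] [AddCommMonoid M] [PartialOrder M] [IsOrderedCancelAddMonoid M]
    (G : SimpleGraph V) (c : V → M) (hc : ∀ v, c v ≠ 0)
    (Γ : Subgroup (Equiv.Perm V))
    (hΓ : ∀ γ ∈ Γ, ∀ u v, G.Adj (γ u) (γ v) ↔ G.Adj u v)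
    (hΓc : ∀ γ ∈ Γ, ∀ v, c (γ v) = c v)
    (k : ℕ) (ℓ : ℕ → V) (I : Finset V)
    (hI : IsPresolvedStableSet G (sstCuts (Γ : Set (Equiv.Perm V)) ℓ k) I)
    (hImax : ∀ J, IsPresolvedStableSet G (sstCuts (Γ : Set (Equiv.Perm V)) ℓ k) J →
      ∑ v ∈ J, c v ≤ ∑ v ∈ I, c v) :
    IsStableSet G I ∧
    (∀ J : Finset V, IsStableSet G J → ∑ v ∈ J, c v ≤ ∑ v ∈ I, c v) ∧
    (∀ p ∈ sstCuts (Γ : Set (Equiv.Perm V)) ℓ k, indic I p.2 ≤ indic I p.1) := by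
  refine ⟨hI.isStableSet, fun J hJ => ?_, fun p hp => ?_⟩
  · obtain ⟨J', hstable, hweight, hclosed⟩ := exists_isLeaderClosed_of_isStableSet hΓ hΓc hJ ℓ k
    exact hweight ▸ hImax J' (hstable.isPresolvedStableSet hclosed)
  · have hclosed : IsLeaderClosed (sstCuts (Γ : Set (Equiv.Perm V)) ℓ k) I :=
      isLeaderClosed_of_forall_sum_le hc (weight_eq_of_mem_sstCuts hΓc)
        (hI.insert_leader sstCuts_trans (adj_or_adj_of_mem_sstCuts hΓ)) hI hImax
    exact indic_le_indic_iff.2 (hclosed p.1 p.2 hp)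

open Finset in
/-- SST presolving is correct: if all node weights are nonzero, every maximum-weight
stable set of the presolved graph `G'` is a maximum-weight stable set of `G` whose
indicator vector satisfies all SST cuts. -/
theorem presolvedGraph_optimal_stable_set
    {V : Type*} [Fintype V] [DecidableEq V] (G : SimpleGraph V)
    (c : V → ℤ) (hc : ∀ v, c v ≠ 0)
    (Γ : Subgroup (Equiv.Perm V))
    (hΓ : ∀ γ ∈ Γ, ∀ u v, G.Adj (γ u) (γ v) ↔ G.Adj u v)
    (hΓc : ∀ γ ∈ Γ, ∀ v, c (γ v) = c v)
    (k : ℕ) (ℓ : ℕ → V) (hdist : ∀ i < k, ∀ j < k, ℓ i = ℓ j → i = j)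
    (I : Finset V)
    (hIsub : (↑I : Set V) ⊆ keptNodes G (sstCuts (↑Γ : Set (Equiv.Perm V)) ℓ k))
    (hIstable : IsStableSet (presolvedGraph G (sstCuts (↑Γ : Set (Equiv.Perm V)) ℓ k)) I)
    (hImax : ∀ J : Finset V,
      (↑J : Set V) ⊆ keptNodes G (sstCuts (↑Γ : Set (Equiv.Perm V)) ℓ k) →
      IsStableSet (presolvedGraph G (sstCuts (↑Γ : Set (Equiv.Perm V)) ℓ k)) J →
      ∑ v ∈ J, c v ≤ ∑ v ∈ I, c v) :
    IsStableSet G I ∧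
    (∀ J : Finset V, IsStableSet G J → ∑ v ∈ J, c v ≤ ∑ v ∈ I, c v) ∧
    (∀ p ∈ sstCuts (↑Γ : Set (Equiv.Perm V)) ℓ k, indic I p.2 ≤ indic I p.1) := by
  exact presolvedGraph_optimal_stable_set_general G c hc Γ hΓ hΓc k ℓ I ⟨hIsub, hIstable⟩
    fun J hJ => hImax J hJ.1 hJ.2
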